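/- Let K, n ≥ 1 and let P : {±1}^K → {0,1} be a function computed by a DNF formula with T clauses over K variables, i.e., P(z) = ⋁_{t=1}^{T} ⋀_{r=1}^{R_t} [z_{j_{t,r}} = b_{t,r}] for some indices j_{t,r} ∈ [K] and signs b_{t,r} ∈ {±1}. Then for every assignment ψ ∈ {±1}^n there exists a DNF formula h with T clauses over the variable set [K] × {±1} × [n] such that for every x ∈ X_{n,K}, h(g(x)) = P(U_x(ψ)). -/

import Mathlib

/-- A signed `K`-tuple over `[n]`. -/
def SignedTuple (n K : ℕ) : Type := (Fin K → Bool) × (Fin K ↪ Fin n)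

/-- `U_x(ψ) = (α_1·ψ_{i_1}, …, α_K·ψ_{i_K})`, where `true` encodes `+1`. -/
def Ux {n K : ℕ} (x : SignedTuple n K) (ψ : Fin n → Bool) : Fin K → Bool :=
  fun j => x.1 j == ψ (x.2 j)

/-- A DNF clause over a variable set `V` is a list of literals `[z_v = c]`;
it evaluates to `1` on `w : V → {±1}` iff every listed coordinate has its
specified sign. -/
def evalClause {V : Type*} (c : List (V × Bool)) (w : V → Bool) : Bool :=
  c.all fun l => w l.1 == l.2

/-- A DNF formula is a disjunction of DNF clauses. -/
def evalDNF {V : Type*} (φ : List (List (V × Bool))) (w : V → Bool) : Bool :=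
  φ.any fun c => evalClause c w

/-- The encoding `g : X_{n,K} → {±1}^{[K]×{±1}×[n]}`: `g_{j,b,i}(x) = −1` iff
`x(j) = (−b, i)` (with `true` encoding `+1` and `!b` encoding `−b`). -/
def gmap {n K : ℕ} (x : SignedTuple n K) : Fin K × Bool × Fin n → Bool :=
  fun v => !(x.1 v.1 == !v.2.1 && x.2 v.1 == v.2.2)

/-!
Fix `ψ`. The literal `[U_x(ψ)_j = b]` fails iff `α_j = −b·ψ_{i_j}`, that is, iff
`x(j) = (−b·ψ_i, i)` for some `i`, which is to say `g_{j, b·ψ_i, i}(x) = −1` for some `i`.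
So the literal is a conjunction of `n` literals in `g(x)`, and replacing a literal by a conjunction
of literals keeps a clause a clause.
-/

section Substitution

variable {V W : Type*}

theorem evalClause_eq_true_iff (c : List (V × Bool)) (w : V → Bool) :
    evalClause c w = true ↔ ∀ l ∈ c, w l.1 = l.2 := by
  simp only [evalClause, List.all_eq_true, beq_iff_eq]

/-- The substitution of the clause `s l` for every literal `l` of a DNF formula. It takes clauses to
clauses because `s l` is a conjunction, so the number of clauses does not change. -/
def substDNF (s : V × Bool → List (W × Bool)) (φ : List (List (V × Bool))) :
    List (List (W × Bool)) :=
  φ.map (List.flatMap s)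

theorem length_substDNF (s : V × Bool → List (W × Bool)) (φ : List (List (V × Bool))) :
    (substDNF s φ).length = φ.length :=
  List.length_map _

theorem evalClause_flatMap {s : V × Bool → List (W × Bool)} {w : W → Bool} {z : V → Bool}
    (hs : ∀ l, evalClause (s l) w = (z l.1 == l.2)) (c : List (V × Bool)) :
    evalClause (c.flatMap s) w = evalClause c z :=
  List.all_flatMap.trans (congrArg c.all (funext hs))

theorem evalDNF_substDNF {s : V × Bool → List (W × Bool)} {w : W → Bool} {z : V → Bool}
    (hs : ∀ l, evalClause (s l) w = (z l.1 == l.2)) (φ : List (List (V × Bool))) :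
    evalDNF (substDNF s φ) w = evalDNF φ z :=
  List.any_map.trans (congrArg φ.any (funext (evalClause_flatMap hs)))

end Substitution

section SignedTuple

variable {n K : ℕ}

theorem gmap_eq_true_iff (x : SignedTuple n K) (j : Fin K) (b : Bool) (i : Fin n) :
    gmap x (j, b, i) = true ↔ (x.2 j = i → x.1 j = b) := by
  simp only [gmap, Bool.not_eq_true', Bool.and_eq_false_imp, beq_iff_eq, beq_eq_false_iff_ne,
    Bool.eq_not, ne_eq]
  tauto

theorem Ux_eq_iff (x : SignedTuple n K) (ψ : Fin n → Bool) (j : Fin K) (b : Bool) :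
    Ux x ψ j = b ↔ x.1 j = (b == ψ (x.2 j)) := by
  unfold Ux
  cases x.1 j <;> cases b <;> simp

/-- The clause `⋀ᵢ [g_{j, b·ψ_i, i} = 1]` in the encoding variables which expresses the literal
`[U_x(ψ)_j = b]`, given as `l = (j, b)`. The product of signs `b·ψ_i` is `b == ψ i`. -/
def literalClause (ψ : Fin n → Bool) (l : Fin K × Bool) : List ((Fin K × Bool × Fin n) × Bool) :=
  (List.finRange n).map fun i => ((l.1, l.2 == ψ i, i), true)

theorem evalClause_literalClause (x : SignedTuple n K) (ψ : Fin n → Bool) (l : Fin K × Bool) :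
    evalClause (literalClause ψ l) (gmap x) = (Ux x ψ l.1 == l.2) := by
  rw [Bool.eq_iff_iff, beq_iff_eq]
  calc evalClause (literalClause ψ l) (gmap x) = true
      ↔ ∀ i, gmap x (l.1, l.2 == ψ i, i) = true := by
        simp only [evalClause_eq_true_iff, literalClause, List.forall_mem_map, List.mem_finRange,
          forall_const]
    _ ↔ ∀ i, x.2 l.1 = i → x.1 l.1 = (l.2 == ψ i) :=
        forall_congr' fun i => gmap_eq_true_iff x l.1 _ i
    _ ↔ x.1 l.1 = (l.2 == ψ (x.2 l.1)) := forall_eq'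
    _ ↔ Ux x ψ l.1 = l.2 := (Ux_eq_iff x ψ l.1 l.2).symm

end SignedTuple

/-- Lemma 3.4 (non-uniform version): if `P : {±1}^K → {0,1}` is computed by a DNF
formula with `T` clauses, then for every assignment `ψ ∈ {±1}^n` there is a DNF
formula `h` with `T` clauses over the variable set `[K] × {±1} × [n]` such that
`h(g(x)) = P(U_x(ψ))` for every `x ∈ X_{n,K}`. -/
theorem dnf_realization (K n T : ℕ) (hK : 1 ≤ K) (hn : 1 ≤ n)
    (P : (Fin K → Bool) → Bool)
    (φ : List (List (Fin K × Bool))) (hφ : φ.length = T)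
    (hP : ∀ z, P z = evalDNF φ z) (ψ : Fin n → Bool) :
    ∃ h : List (List ((Fin K × Bool × Fin n) × Bool)),
      h.length = T ∧ ∀ x : SignedTuple n K, evalDNF h (gmap x) = P (Ux x ψ) := by
  refine ⟨substDNF (literalClause ψ) φ, (length_substDNF _ φ).trans hφ, fun x => ?_⟩
  rw [hP, evalDNF_substDNF (evalClause_literalClause x ψ)]
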